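/- (Matrix Radial Isotropy, generic case.) Let F = (X_1, …, X_n) with X_i ∈ ℝ^{d×d_i} be a generic matrix frame and let c = (c_1,…,c_n) ∈ ℚ^n_{>0} with ∑_{i=1}^n c_i = d. Then the following are equivalent: (i) c lies in the relative (intrinsic) interior of the orbit polytope K_F; (ii) (F, c) can be transformed into a radial isotropic frame, i.e. there exists A ∈ GL(d,ℝ) with ∑_{i=1}^n c_i·(A·X_i)(A·X_i)ᵀ/‖A·X_i‖_F² = I_d; (iii) f_F(c) is finite and the infimum defining f_F(c) is attained at some point t ∈ ℝ^n. -/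

import Mathlib

open scoped BigOperators
open Matrix

namespace MFrames

/-- The squared Frobenius norm of a real matrix. -/
noncomputable def frobSq {α β : Type*} [Fintype α] [Fintype β] (X : Matrix α β ℝ) : ℝ :=
  ∑ i, ∑ j, X i j ^ 2

variable {d n : ℕ} {m : Fin n → ℕ}

/-- Squared distance between two tuples of matrices. -/
noncomputable def dist2 (F G : ∀ i : Fin n, Matrix (Fin d) (Fin (m i)) ℝ) : ℝ :=
  ∑ i, frobSq (F i - G i)

/-- The frame operator `∑ Xᵢ Xᵢᵀ`. -/
noncomputable def frameOp (F : ∀ i : Fin n, Matrix (Fin d) (Fin (m i)) ℝ) :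
    Matrix (Fin d) (Fin d) ℝ :=
  ∑ i, F i * (F i)ᵀ

/-- `F` is a matrix frame: `∑ Xᵢ Xᵢᵀ` is positive definite. -/
def IsMatrixFrame (F : ∀ i : Fin n, Matrix (Fin d) (Fin (m i)) ℝ) : Prop :=
  (frameOp F).PosDef

/-- `F` is an ε-nearly equal-norm Parseval matrix frame. -/
def NearlyENParseval (ε : ℝ) (F : ∀ i : Fin n, Matrix (Fin d) (Fin (m i)) ℝ) : Prop :=
  (frameOp F - (1 - ε) • (1 : Matrix (Fin d) (Fin d) ℝ)).PosSemidef ∧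
  ((1 + ε) • (1 : Matrix (Fin d) (Fin d) ℝ) - frameOp F).PosSemidef ∧
  ∀ i, (1 - ε) * ((d : ℝ) / n) ≤ frobSq (F i) ∧ frobSq (F i) ≤ (1 + ε) * ((d : ℝ) / n)

/-- `F` is an equal-norm Parseval matrix frame. -/
def EqualNormParseval (F : ∀ i : Fin n, Matrix (Fin d) (Fin (m i)) ℝ) : Prop :=
  frameOp F = 1 ∧ ∀ i, frobSq (F i) = (d : ℝ) / n

/-- The columns of the concatenated matrix `[X₁ | … | Xₙ]`. -/
def col (F : ∀ i : Fin n, Matrix (Fin d) (Fin (m i)) ℝ) (p : (i : Fin n) × Fin (m i)) :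
    Fin d → ℝ :=
  fun r => F p.1 r p.2

/-- `F` is generic: `n > d` and any `d` of the columns of `[X₁ | … | Xₙ]` are linearly
independent (hence a basis of `ℝ^d`). -/
def Generic (F : ∀ i : Fin n, Matrix (Fin d) (Fin (m i)) ℝ) : Prop :=
  d < n ∧ ∀ S : Finset ((i : Fin n) × Fin (m i)), S.card = d →
    LinearIndependent ℝ (fun p : S => col F (p : (i : Fin n) × Fin (m i)))

/-- Column span of a matrix. -/
def colSpan {k : ℕ} (X : Matrix (Fin d) (Fin k) ℝ) : Submodule ℝ (Fin d → ℝ) :=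
  Submodule.span ℝ (Set.range Xᵀ)

/-- The orbit polytope `K_F` of a tuple of matrices. -/
def orbitPolytope (F : ∀ i : Fin n, Matrix (Fin d) (Fin (m i)) ℝ) : Set (Fin n → ℝ) :=
  {c | (∀ i, 0 ≤ c i) ∧ (∑ i, c i = d) ∧
    ∀ I : Finset (Fin n),
      ∑ i ∈ I, c i ≤ (Module.finrank ℝ ↥(⨆ i ∈ I, colSpan (F i)) : ℝ)}

/-- `Φ_F(t) = log det (∑ e^{tᵢ} Xᵢ Xᵢᵀ)`. -/
noncomputable def Phi (F : ∀ i : Fin n, Matrix (Fin d) (Fin (m i)) ℝ) (t : Fin n → ℝ) : ℝ :=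
  Real.log (∑ i, Real.exp (t i) • (F i * (F i)ᵀ)).det

/-- The objective function `Φ_F(t) - ⟨t, c⟩` whose infimum over `t` is `f_F(c)`. -/
noncomputable def obj (F : ∀ i : Fin n, Matrix (Fin d) (Fin (m i)) ℝ)
    (c : Fin n → ℝ) (t : Fin n → ℝ) : ℝ :=
  Phi F t - ∑ i, t i * c i

/-- `Δ_S` for `S ∈ 𝒜`, where `S` is encoded as a function `σ` assigning to each `i` a subset
`σ i ⊆ {1,…,dᵢ}` of the columns of `Xᵢ` (with `i ∈ S` iff `σ i ≠ ∅`). -/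
noncomputable def Delta (F : ∀ i : Fin n, Matrix (Fin d) (Fin (m i)) ℝ)
    (σ : ∀ i : Fin n, Finset (Fin (m i))) : ℝ :=
  (∑ i, ∑ k ∈ σ i, Matrix.of (fun r s : Fin d => F i r k * F i s k)).det

/-- The index set `𝒜`: collections of subsets of columns with `d` columns in total. -/
def indexA (d : ℕ) (m : Fin n → ℕ) : Finset (∀ i : Fin n, Finset (Fin (m i))) :=
  Finset.univ.filter fun σ => (∑ i, (σ i).card) = d

/-- Membership in the semialgebraic set `𝕍(F, c)`.  (Summing `(σ i).card • ⋯` over all of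
`𝒜` is the same as summing `|Sᵢ| • ⋯` over those `S ∈ 𝒜` with `i ∈ S`.) -/
noncomputable def inVariety (F : ∀ i : Fin n, Matrix (Fin d) (Fin (m i)) ℝ)
    (c ξ : Fin n → ℝ) : Prop :=
  (∀ i, 0 < ξ i) ∧ ∀ i,
    (∑ σ ∈ indexA d m, ((σ i).card : ℝ) * (∏ l, ξ l ^ (σ l).card) * Delta F σ)
      = c i * ∑ σ ∈ indexA d m, (∏ l, ξ l ^ (σ l).card) * Delta F σ

/-- `A` transforms `(F, c)` into a radial isotropic frame. -/
noncomputable def TransformsToRIF (F : ∀ i : Fin n, Matrix (Fin d) (Fin (m i)) ℝ)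
    (c : Fin n → ℝ) (A : Matrix (Fin d) (Fin d) ℝ) : Prop :=
  ∑ i, (c i / frobSq (A * F i)) • ((A * F i) * (A * F i)ᵀ) = 1

/-- Columns of `X` all orthogonal to the subspace `T`, i.e. `Col(X) ⊆ T^⊥`. -/
def colsPerp {k : ℕ} (X : Matrix (Fin d) (Fin k) ℝ) (T : Submodule ℝ (Fin d → ℝ)) : Prop :=
  ∀ x ∈ T, Xᵀ.mulVec x = 0

end MFrames

namespace MFrames

lemma mul_transpose_eq_sum {d k : ℕ} (X : Matrix (Fin d) (Fin k) ℝ) :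
    X * Xᵀ = ∑ j, vecMulVec (fun r => X r j) (fun r => X r j) := by
  ext a b
  simp [Matrix.mul_apply, Matrix.sum_apply, vecMulVec_apply]

/-- The weighted frame operator. -/
noncomputable def opM {d n : ℕ} {m : Fin n → ℕ}
    (F : ∀ i : Fin n, Matrix (Fin d) (Fin (m i)) ℝ) (t : Fin n → ℝ) :
    Matrix (Fin d) (Fin d) ℝ :=
  ∑ i, Real.exp (t i) • (F i * (F i)ᵀ)

lemma opM_eq {d n : ℕ} {m : Fin n → ℕ}
    (F : ∀ i : Fin n, Matrix (Fin d) (Fin (m i)) ℝ) (t : Fin n → ℝ) :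
    opM F t = ∑ p : (i : Fin n) × Fin (m i), Real.exp (t p.1) • vecMulVec (col F p) (col F p) := by
  rw [opM, Fintype.sum_sigma]
  refine Finset.sum_congr rfl fun i _ => ?_
  rw [mul_transpose_eq_sum, Finset.smul_sum]
  rfl

lemma psd_vec {d : ℕ} (u : Fin d → ℝ) {a : ℝ} (ha : 0 ≤ a) :
    (a • vecMulVec u u).PosSemidef := by
  have := posSemidef_vecMulVec_self_star u
  rw [star_trivial] at this
  exact this.smul ha

lemma det_rank_one {d : ℕ} {A : Matrix (Fin d) (Fin d) ℝ} (hA : A.PosDef) (u : Fin d → ℝ)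
    {a : ℝ} (ha : 0 ≤ a) : A.det ≤ (A + a • vecMulVec u u).det := by
  have h1 : a • vecMulVec u u = replicateCol Unit (a • u) * replicateRow Unit u := by
    ext i j
    simp [vecMulVec_apply, Matrix.mul_apply, mul_assoc]
  rw [h1, det_add_replicateCol_mul_replicateRow hA.det_pos.ne'.isUnit]
  have h2 : (1 + replicateRow Unit u * A⁻¹ * replicateCol Unit (a • u)).det
      = 1 + a * (u ⬝ᵥ (A⁻¹ *ᵥ u)) := by
    rw [det_unique]
    simp only [Matrix.add_apply, Matrix.one_apply_eq, add_right_inj]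
    rw [Matrix.mul_assoc, ← Matrix.replicateCol_mulVec, replicateRow_mul_replicateCol_apply,
      mulVec_smul, dotProduct_smul, smul_eq_mul]
  rw [h2]
  have h3 := hA.inv.posSemidef.dotProduct_mulVec_nonneg u
  rw [star_trivial] at h3
  have := mul_nonneg hA.det_pos.le (mul_nonneg ha h3)
  linarith

lemma det_sum_ge {d : ℕ} {P : Type*} [DecidableEq P] {A : Matrix (Fin d) (Fin d) ℝ} (hA : A.PosDef)
    (u : P → Fin d → ℝ) (a : P → ℝ) (ha : ∀ p, 0 ≤ a p) (T : Finset P) :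
    (A + ∑ p ∈ T, a p • vecMulVec (u p) (u p)).PosDef ∧
    A.det ≤ (A + ∑ p ∈ T, a p • vecMulVec (u p) (u p)).det := by
  induction T using Finset.induction_on with
  | empty => simpa using hA
  | insert p T hp ih =>
    rw [Finset.sum_insert hp, add_comm (a p • _), ← add_assoc]
    exact ⟨ih.1.add_posSemidef (psd_vec _ (ha p)), ih.2.trans (det_rank_one ih.1 _ (ha p))⟩

lemma det_sub_ge {d : ℕ} {P : Type*} [Fintype P] [DecidableEq P] (S : Finset P) (hS : S.card = d)
    (u : P → Fin d → ℝ) (hli : LinearIndependent ℝ (fun p : S => u p)) :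
    ∃ C : ℝ, 0 < C ∧ ∀ a : P → ℝ, (∀ p, 0 < a p) →
      (∑ p, a p • vecMulVec (u p) (u p)).PosDef ∧
      C * ∏ p ∈ S, a p ≤ (∑ p, a p • vecMulVec (u p) (u p)).det := by
  let e : Fin d ≃ S := (Finset.equivFinOfCardEq hS).symm
  let Y : Matrix (Fin d) (Fin d) ℝ := Matrix.of fun j r => u (e j) r
  have hY : IsUnit Y := by
    rw [← Matrix.linearIndependent_rows_iff_isUnit]
    exact hli.comp e e.injective
  have hdet : Y.det ≠ 0 := ((Matrix.isUnit_iff_isUnit_det _).1 hY).ne_zero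
  refine ⟨Y.det ^ 2, by positivity, fun a ha => ?_⟩
  have hB : ∑ p ∈ S, a p • vecMulVec (u p) (u p)
      = Yᵀ * diagonal (fun j => a (e j)) * Y := by
    ext r s
    rw [← Finset.sum_coe_sort, ← e.sum_comp]
    rw [Matrix.mul_apply]
    simp only [mul_diagonal, Matrix.sum_apply, Matrix.smul_apply, vecMulVec_apply,
      transpose_apply, Y, Matrix.of_apply, smul_eq_mul]
    exact Finset.sum_congr rfl fun _ _ => by ring
  have hBdet : (∑ p ∈ S, a p • vecMulVec (u p) (u p)).det = Y.det ^ 2 * ∏ p ∈ S, a p := by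
    have hpr : ∏ p ∈ S, a p = ∏ j, a (e j) := by
      rw [← Finset.prod_coe_sort, ← e.prod_comp]
    rw [hB, det_mul, det_mul, det_transpose, det_diagonal, hpr]
    ring
  have hBpsd : (∑ p ∈ S, a p • vecMulVec (u p) (u p)).PosSemidef :=
    posSemidef_sum _ fun p _ => psd_vec _ (ha p).le
  have hprod : 0 < ∏ p ∈ S, a p := Finset.prod_pos fun p _ => ha p
  have hBpd : (∑ p ∈ S, a p • vecMulVec (u p) (u p)).PosDef := by
    rw [hBpsd.posDef_iff_det_ne_zero, hBdet]
    positivity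
  have := det_sum_ge hBpd u a (fun p => (ha p).le) Sᶜ
  rw [Finset.sum_add_sum_compl, hBdet] at this
  exact this

/-- top `d` elements -/
lemma exists_top {P : Type*} [Fintype P] [DecidableEq P] (g : P → ℝ) {d : ℕ} (hd : 0 < d)
    (hP : d ≤ Fintype.card P) :
    ∃ S : Finset P, S.card = d ∧ ∃ τ : ℝ, (∀ p ∈ S, τ ≤ g p) ∧ ∀ p ∉ S, g p ≤ τ := by
  have hne : (Finset.powersetCard d (Finset.univ : Finset P)).Nonempty :=
    Finset.powersetCard_nonempty.2 (by simpa using hP)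
  obtain ⟨S, hS, hmax⟩ := Finset.exists_max_image _ (fun S => ∑ p ∈ S, g p) hne
  have hSc : S.card = d := (Finset.mem_powersetCard.1 hS).2
  have hSne : S.Nonempty := by rw [← Finset.card_pos, hSc]; exact hd
  obtain ⟨q, hq, hmin⟩ := Finset.exists_min_image S g hSne
  refine ⟨S, hSc, g q, hmin, fun p hp => ?_⟩
  have hp' : p ∉ S.erase q := fun h => hp (Finset.mem_of_mem_erase h)
  have := hmax (insert p (S.erase q)) (Finset.mem_powersetCard.2 ⟨Finset.subset_univ _, by
    rw [Finset.card_insert_of_notMem hp', Finset.card_erase_of_mem hq, hSc]; omega⟩)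
  rw [Finset.sum_insert hp', ← Finset.add_sum_erase S g hq] at this
  linarith

lemma obj_eq {d n : ℕ} {m : Fin n → ℕ}
    (F : ∀ i : Fin n, Matrix (Fin d) (Fin (m i)) ℝ) (c t : Fin n → ℝ) :
    obj F c t = Real.log (opM F t).det - ∑ i, t i * c i := rfl

end MFrames

namespace MFrames

lemma card_ge {d n : ℕ} {m : Fin n → ℕ}
    (F : ∀ i : Fin n, Matrix (Fin d) (Fin (m i)) ℝ) (hF : IsMatrixFrame F) :
    d ≤ Fintype.card ((i : Fin n) × Fin (m i)) := by
  have htop : ⊤ ≤ Submodule.span ℝ (Set.range (col F)) := by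
    have hU : Function.Surjective (frameOp F).mulVec :=
      Matrix.mulVec_surjective_iff_isUnit.2 hF.isUnit
    intro x _
    obtain ⟨y, rfl⟩ := hU x
    have : frameOp F = ∑ p : (i : Fin n) × Fin (m i), vecMulVec (col F p) (col F p) := by
      have := opM_eq F 0
      simpa [opM, frameOp] using this
    rw [this, Matrix.sum_mulVec]
    refine Submodule.sum_mem _ fun p _ => ?_
    rw [vecMulVec_mulVec]
    simpa using Submodule.smul_mem _ (col F p ⬝ᵥ y) (Submodule.subset_span (Set.mem_range_self p))
  have h := finrank_range_le_card (R := ℝ) (col F)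
  rw [Set.finrank, top_le_iff.1 htop, finrank_top] at h
  simpa using h

/-- Genericity extends to column sets with at most `d` elements. -/
lemma generic_li {d n : ℕ} {m : Fin n → ℕ}
    (F : ∀ i : Fin n, Matrix (Fin d) (Fin (m i)) ℝ) (hF : IsMatrixFrame F) (hgen : Generic F)
    (T : Finset ((i : Fin n) × Fin (m i))) (hT : T.card ≤ d) :
    LinearIndependent ℝ (fun p : T => col F (p : (i : Fin n) × Fin (m i))) := by
  obtain ⟨S, hTS, hS⟩ := Finset.exists_superset_card_eq hT (card_ge F hF)
  exact (hgen.2 S hS).comp (Set.inclusion hTS) (Set.inclusion_injective hTS)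

lemma col_mem {d n : ℕ} {m : Fin n → ℕ}
    (F : ∀ i : Fin n, Matrix (Fin d) (Fin (m i)) ℝ) (p : (i : Fin n) × Fin (m i)) :
    col F p ∈ colSpan (F p.1) := Submodule.subset_span ⟨p.2, rfl⟩

lemma finrank_ge {d n : ℕ} {m : Fin n → ℕ}
    (F : ∀ i : Fin n, Matrix (Fin d) (Fin (m i)) ℝ) (hF : IsMatrixFrame F) (hgen : Generic F)
    (I : Finset (Fin n)) :
    min d (∑ i ∈ I, m i) ≤ Module.finrank ℝ ↥(⨆ i ∈ I, colSpan (F i)) := by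
  let T : Finset ((i : Fin n) × Fin (m i)) := I.sigma fun _ => Finset.univ
  have hT : T.card = ∑ i ∈ I, m i := by simp [T, Finset.card_sigma]
  obtain ⟨S, hST, hS⟩ := Finset.exists_subset_card_eq (s := T) (n := min d (∑ i ∈ I, m i))
    (by rw [hT]; exact min_le_right _ _)
  have hli := generic_li F hF hgen S (hS ▸ min_le_left _ _)
  have h1 := finrank_span_eq_card hli
  rw [Fintype.card_coe, hS] at h1
  rw [← h1]
  apply Submodule.finrank_mono
  rw [Submodule.span_le]
  rintro _ ⟨p, rfl⟩
  have hp : (p : (i : Fin n) × Fin (m i)).1 ∈ I := (Finset.mem_sigma.1 (hST p.2)).1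
  exact (le_iSup₂_of_le (f := fun i (_ : i ∈ I) => colSpan (F i)) _ hp le_rfl) (col_mem F p)

lemma finrank_colSpan_le {d k : ℕ} (X : Matrix (Fin d) (Fin k) ℝ) :
    Module.finrank ℝ (colSpan X) ≤ k := by
  have := finrank_range_le_card (R := ℝ) Xᵀ
  rw [Fintype.card_fin] at this
  exact this

lemma mem_orbit_iff {d n : ℕ} {m : Fin n → ℕ}
    (F : ∀ i : Fin n, Matrix (Fin d) (Fin (m i)) ℝ) (hF : IsMatrixFrame F) (hgen : Generic F)
    (c : Fin n → ℝ) : c ∈ orbitPolytope F ↔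
      (∀ i, 0 ≤ c i) ∧ (∑ i, c i = d) ∧ ∀ i, c i ≤ m i := by
  constructor
  · rintro ⟨h0, h1, h2⟩
    refine ⟨h0, h1, fun i => ?_⟩
    have := h2 {i}
    rw [Finset.sum_singleton, Finset.iSup_singleton] at this
    exact this.trans (by exact_mod_cast finrank_colSpan_le (F i))
  · rintro ⟨h0, h1, h2⟩
    refine ⟨h0, h1, fun I => ?_⟩
    have h := finrank_ge F hF hgen I
    have h' : ((min d (∑ i ∈ I, m i) : ℕ) : ℝ)
      ≤ (Module.finrank ℝ ↥(⨆ i ∈ I, colSpan (F i)) : ℝ) := by exact_mod_cast h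
    refine le_trans ?_ h'
    push_cast
    refine le_min ?_ (Finset.sum_le_sum fun i _ => h2 i)
    rw [← h1]
    exact Finset.sum_le_sum_of_subset_of_nonneg (Finset.subset_univ _) fun i _ _ => h0 i

lemma interior_iff {d n : ℕ} {m : Fin n → ℕ}
    (F : ∀ i : Fin n, Matrix (Fin d) (Fin (m i)) ℝ) (hF : IsMatrixFrame F) (hgen : Generic F)
    (c : Fin n → ℝ) (hc : ∀ i, 0 < c i) (hsum : ∑ i, c i = d) :
    c ∈ intrinsicInterior ℝ (orbitPolytope F) ↔ ∀ i, c i < m i := by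
  constructor
  · intro h i
    have hK := (mem_orbit_iff F hF hgen c).1 (intrinsicInterior_subset h)
    have hm : ∀ j, 1 ≤ m j := fun j => by
      have : (0 : ℝ) < m j := (hc j).trans_le (hK.2.2 j)
      exact_mod_cast this
    have hN : d < ∑ j, m j := by
      refine hgen.1.trans_le ?_
      calc n = ∑ j : Fin n, 1 := by simp
        _ ≤ _ := Finset.sum_le_sum fun j _ => hm j
    have hN' : (d : ℝ) < ∑ j, (m j : ℝ) := by exact_mod_cast hN
    have hN0 : (0 : ℝ) < ∑ j, (m j : ℝ) := lt_of_le_of_lt (Nat.cast_nonneg d) hN'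
    set N : ℝ := ∑ j, (m j : ℝ) with hNdef
    have hr : (d : ℝ) / N < 1 := (div_lt_one hN0).2 hN'
    let c' : Fin n → ℝ := fun j => m j * (d / N)
    have hc' : c' ∈ orbitPolytope F := by
      rw [mem_orbit_iff F hF hgen]
      refine ⟨fun j => by positivity, ?_, fun j => ?_⟩
      · simp only [c']
        rw [← Finset.sum_mul, ← hNdef]
        field_simp
      · exact mul_le_of_le_one_right (Nat.cast_nonneg _) hr.le
    refine lt_of_le_of_ne (hK.2.2 i) fun heq => ?_
    obtain ⟨y, hy, hyc⟩ := mem_intrinsicInterior.1 h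
    have hcs : c ∈ affineSpan ℝ (orbitPolytope F) := hyc ▸ y.2
    have hcs' : c' ∈ affineSpan ℝ (orbitPolytope F) := subset_affineSpan _ _ hc'
    let L : ℝ → affineSpan ℝ (orbitPolytope F) := fun s =>
      ⟨AffineMap.lineMap c c' s, AffineMap.lineMap_mem s hcs hcs'⟩
    have hL : Continuous L :=
      Continuous.subtype_mk (AffineMap.lineMap_continuous) _
    have hL0 : L 0 = y := by
      apply Subtype.ext
      simp [L, hyc]
    have hev : ∀ᶠ s in nhds (0 : ℝ), L s ∈ interior ((↑) ⁻¹' (orbitPolytope F) :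
        Set (affineSpan ℝ (orbitPolytope F))) := by
      apply hL.continuousAt.eventually_mem
      rw [hL0]
      exact isOpen_interior.mem_nhds hy
    obtain ⟨ε, hε, hball⟩ := Metric.eventually_nhds_iff.1 hev
    have h1 := interior_subset (hball (y := -(ε / 2)) (by
      rw [Real.dist_eq, sub_zero, abs_neg, abs_of_pos (by positivity)]; linarith))
    have h2 := ((mem_orbit_iff F hF hgen _).1 h1).2.2 i
    simp only [L, AffineMap.lineMap_apply, vsub_eq_sub, vadd_eq_add, Pi.add_apply, Pi.smul_apply,
      Pi.sub_apply, smul_eq_mul] at h2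
    have h3 : c' i < m i := by
      have : (0 : ℝ) < m i := by exact_mod_cast hm i
      exact mul_lt_of_lt_one_right this hr
    rw [heq] at h2
    nlinarith
  · intro h
    have hcK : c ∈ orbitPolytope F :=
      (mem_orbit_iff F hF hgen c).2 ⟨fun i => (hc i).le, hsum, fun i => (h i).le⟩
    have hplane : ∀ x ∈ affineSpan ℝ (orbitPolytope F), ∑ i, x i = d := by
      intro x hx
      refine affineSpan_induction (p := fun x => ∑ i, x i = (d : ℝ)) hx (fun x hx => hx.2.1) ?_
      · intro r u v w hu hv hw
        simp only [vsub_eq_sub, vadd_eq_add, Pi.add_apply, Pi.smul_apply,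
          Pi.sub_apply, smul_eq_mul, Finset.sum_add_distrib, ← Finset.mul_sum,
          Finset.sum_sub_distrib, hu, hv, hw]
        ring
    refine mem_intrinsicInterior.2 ⟨⟨c, subset_affineSpan _ _ hcK⟩, ?_, rfl⟩
    rw [mem_interior]
    refine ⟨(↑) ⁻¹' {x : Fin n → ℝ | ∀ i, 0 < x i ∧ x i < m i}, ?_, ?_, ?_⟩
    · intro x hx
      exact (mem_orbit_iff F hF hgen _).2 ⟨fun i => (hx i).1.le, hplane _ x.2,
        fun i => (hx i).2.le⟩
    · refine IsOpen.preimage continuous_subtype_val ?_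
      simp only [Set.ofPred_forall]
      refine isOpen_iInter_of_finite fun i => ?_
      exact (isOpen_lt continuous_const (continuous_apply i)).inter
        (isOpen_lt (continuous_apply i) continuous_const)
    · exact fun i => ⟨hc i, h i⟩

end MFrames

namespace MFrames

lemma opM_posDef {d n : ℕ} {m : Fin n → ℕ}
    (F : ∀ i : Fin n, Matrix (Fin d) (Fin (m i)) ℝ) (hF : IsMatrixFrame F) (hgen : Generic F)
    (t : Fin n → ℝ) : (opM F t).PosDef := by
  obtain ⟨S, -, hS⟩ := Finset.exists_superset_card_eq (n := d)
    (s := (∅ : Finset ((i : Fin n) × Fin (m i)))) (by simp) (card_ge F hF)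
  obtain ⟨C, -, h⟩ := det_sub_ge S hS (col F) (hgen.2 S hS)
  rw [opM_eq]
  exact (h (fun p => Real.exp (t p.1)) fun p => Real.exp_pos _).1

lemma obj_shift {d n : ℕ} {m : Fin n → ℕ}
    (F : ∀ i : Fin n, Matrix (Fin d) (Fin (m i)) ℝ) (hF : IsMatrixFrame F) (hgen : Generic F)
    (c : Fin n → ℝ) (hsum : ∑ i, c i = d) (t : Fin n → ℝ) (τ : ℝ) :
    obj F c (fun i => t i - τ) = obj F c t := by
  have h : opM F (fun i => t i - τ) = Real.exp (-τ) • opM F t := by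
    simp only [opM, Finset.smul_sum, smul_smul, ← Real.exp_add]
    refine Finset.sum_congr rfl fun i _ => ?_
    ring_nf
  rw [obj_eq, obj_eq, h, det_smul, Fintype.card_fin,
    Real.log_mul (by positivity) (opM_posDef F hF hgen t).det_pos.ne', Real.log_pow, Real.log_exp]
  simp only [sub_mul, Finset.sum_sub_distrib, ← Finset.mul_sum, hsum]
  ring

lemma obj_continuous {d n : ℕ} {m : Fin n → ℕ}
    (F : ∀ i : Fin n, Matrix (Fin d) (Fin (m i)) ℝ) (hF : IsMatrixFrame F) (hgen : Generic F)
    (c : Fin n → ℝ) : Continuous (obj F c) := by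
  have h1 : Continuous (fun t => opM F t) := by
    unfold opM
    fun_prop
  have h2 : Continuous (fun t => Real.log (opM F t).det) :=
    h1.matrix_det.log fun t => (opM_posDef F hF hgen t).det_pos.ne'
  have h3 : Continuous (fun t : Fin n → ℝ => ∑ i, t i * c i) := by fun_prop
  exact h2.sub h3

lemma coercive {d n : ℕ} {m : Fin n → ℕ}
    (F : ∀ i : Fin n, Matrix (Fin d) (Fin (m i)) ℝ) (hF : IsMatrixFrame F) (hgen : Generic F)
    (c : Fin n → ℝ) (hc : ∀ i, 0 < c i) (hsum : ∑ i, c i = d) (hcm : ∀ i, c i < m i) :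
    ∃ C δ : ℝ, 0 < δ ∧ ∀ t : Fin n → ℝ, ∃ τ : ℝ,
      C + δ * ∑ i, |t i - τ| ≤ obj F c t := by
  classical
  have hn : 0 < n := lt_of_le_of_lt (Nat.zero_le d) hgen.1
  have : Nonempty (Fin n) := ⟨⟨0, hn⟩⟩
  have hd : 0 < d := by
    have : (0 : ℝ) < d := by
      rw [← hsum]
      exact Finset.sum_pos (fun i _ => hc i) Finset.univ_nonempty
    exact_mod_cast this
  obtain ⟨i0, hi0⟩ := Finite.exists_min fun i => min (c i) (m i - c i)
  have hδ : 0 < min (c i0) (m i0 - c i0) := lt_min (hc i0) (sub_pos.2 (hcm i0))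
  set δ := min (c i0) (m i0 - c i0) with hδdef
  choose C hC0 hC using fun S : {S : Finset ((i : Fin n) × Fin (m i)) // S.card = d} =>
    det_sub_ge S.1 S.2 (col F) (hgen.2 S.1 S.2)
  have : Nonempty {S : Finset ((i : Fin n) × Fin (m i)) // S.card = d} := by
    obtain ⟨S, hS, -⟩ := exists_top (fun _ : (i : Fin n) × Fin (m i) => (0 : ℝ)) hd (card_ge F hF)
    exact ⟨⟨S, hS⟩⟩
  obtain ⟨S0, hS0⟩ := Finite.exists_min C
  refine ⟨Real.log (C S0), δ, hδ, fun t => ?_⟩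
  obtain ⟨S, hS, τ, hτ1, hτ2⟩ := exists_top (fun p : (i : Fin n) × Fin (m i) => t p.1) hd
    (card_ge F hF)
  refine ⟨τ, ?_⟩
  have h1 := (hC ⟨S, hS⟩ (fun p => Real.exp (t p.1)) fun p => Real.exp_pos _).2
  rw [← opM_eq, ← Real.exp_sum] at h1
  have h2 : Real.log (C S0) + ∑ p ∈ S, t p.1 ≤ Real.log (opM F t).det := by
    rw [← Real.log_exp (∑ p ∈ S, t p.1), ← Real.log_mul (hC0 _).ne' (Real.exp_pos _).ne']
    refine Real.log_le_log (mul_pos (hC0 _) (Real.exp_pos _)) (le_trans ?_ h1)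
    exact mul_le_mul_of_nonneg_right (hS0 _) (Real.exp_pos _).le
  have h3 : ∑ p ∈ S, t p.1 - ∑ i, t i * c i
      = ∑ i, ((∑ k : Fin (m i), if (⟨i, k⟩ : (i : Fin n) × Fin (m i)) ∈ S then t i - τ else 0)
        - c i * (t i - τ)) := by
    rw [Finset.sum_sub_distrib]
    have e1 : ∑ i, ∑ k : Fin (m i),
        (if (⟨i, k⟩ : (i : Fin n) × Fin (m i)) ∈ S then t i - τ else 0)
        = ∑ p ∈ S, (t p.1 - τ) := by
      rw [← Fintype.sum_sigma' (fun i k =>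
        if (⟨i, k⟩ : (i : Fin n) × Fin (m i)) ∈ S then t i - τ else 0), ← Finset.sum_filter]
      simp
    rw [e1]
    simp only [mul_sub, Finset.sum_sub_distrib, ← Finset.sum_mul, hsum, Finset.sum_const, hS,
      nsmul_eq_mul]
    rw [Finset.sum_congr rfl fun i _ => mul_comm (t i) (c i)]
    ring
  have h4 : δ * ∑ i, |t i - τ| ≤ ∑ p ∈ S, t p.1 - ∑ i, t i * c i := by
    rw [h3, Finset.mul_sum]
    refine Finset.sum_le_sum fun i _ => ?_
    have hi := hi0 i
    have ha : δ ≤ c i := hi.trans (min_le_left _ _)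
    have hb : δ ≤ m i - c i := hi.trans (min_le_right _ _)
    rcases lt_trichotomy (t i) τ with h | h | h
    · have : ∀ k : Fin (m i), (⟨i, k⟩ : (i : Fin n) × Fin (m i)) ∉ S := fun k hk =>
        absurd (hτ1 _ hk) (not_le.2 h)
      simp only [this, if_false, Finset.sum_const_zero]
      rw [abs_of_neg (sub_neg.2 h)]
      nlinarith
    · simp [h]
    · have : ∀ k : Fin (m i), (⟨i, k⟩ : (i : Fin n) × Fin (m i)) ∈ S := fun k => by
        by_contra hk
        exact absurd (hτ2 _ hk) (not_le.2 h)
      simp only [this, if_true, Finset.sum_const, Finset.card_univ, Fintype.card_fin, nsmul_eq_mul]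
      rw [abs_of_pos (sub_pos.2 h)]
      nlinarith
  rw [obj_eq]
  linarith

lemma exists_min_obj {d n : ℕ} {m : Fin n → ℕ}
    (F : ∀ i : Fin n, Matrix (Fin d) (Fin (m i)) ℝ) (hF : IsMatrixFrame F) (hgen : Generic F)
    (c : Fin n → ℝ) (hc : ∀ i, 0 < c i) (hsum : ∑ i, c i = d) (hcm : ∀ i, c i < m i) :
    ∃ t, ∀ s, obj F c t ≤ obj F c s := by
  obtain ⟨C, δ, hδ, h⟩ := coercive F hF hgen c hc hsum hcm
  let R : ℝ := max 0 ((obj F c 0 - C) / δ)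
  have hR : 0 ≤ R := le_max_left _ _
  obtain ⟨t, -, ht⟩ := (isCompact_closedBall (0 : Fin n → ℝ) R).exists_isMinOn
    ⟨0, Metric.mem_closedBall_self hR⟩ (obj_continuous F hF hgen c).continuousOn
  refine ⟨t, fun s => ?_⟩
  obtain ⟨τ, hτ⟩ := h s
  by_cases hs : (fun i => s i - τ) ∈ Metric.closedBall (0 : Fin n → ℝ) R
  · have := ht hs
    rw [← obj_shift F hF hgen c hsum s τ]
    exact this
  · have h0 : obj F c t ≤ obj F c 0 := ht (Metric.mem_closedBall_self hR)
    refine h0.trans (le_trans ?_ hτ)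
    rw [mem_closedBall_zero_iff, not_le] at hs
    have h1 : ‖fun i => s i - τ‖ ≤ ∑ i, |s i - τ| := by
      rw [pi_norm_le_iff_of_nonneg (Finset.sum_nonneg fun i _ => abs_nonneg _)]
      intro i
      exact Finset.single_le_sum (f := fun i => |s i - τ|) (fun i _ => abs_nonneg _)
        (Finset.mem_univ i)
    have h2 : (obj F c 0 - C) / δ ≤ ∑ i, |s i - τ| :=
      (le_max_right _ _).trans (hs.le.trans h1)
    rw [div_le_iff₀ hδ] at h2
    linarith

end MFrames

namespace MFrames

lemma frobSq_eq_trace {d k : ℕ} (X : Matrix (Fin d) (Fin k) ℝ) :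
    frobSq X = (X * Xᵀ).trace := by
  simp [frobSq, Matrix.trace, Matrix.mul_apply, sq]

open scoped MatrixOrder in
lemma exists_whiten {d : ℕ} {M : Matrix (Fin d) (Fin d) ℝ} (hM : M.PosDef) :
    ∃ A : Matrix (Fin d) (Fin d) ℝ, IsUnit A.det ∧ A * M * Aᵀ = 1 := by
  obtain ⟨B, hB⟩ := CStarAlgebra.nonneg_iff_eq_star_mul_self.1 hM.posSemidef.nonneg
  have hB' : M = Bᵀ * B := by
    rw [hB, Matrix.star_eq_conjTranspose, conjTranspose_eq_transpose_of_trivial]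
  have hdet : B.det ≠ 0 := by
    intro h
    have := hM.det_pos
    rw [hB', det_mul, h, mul_zero] at this
    exact lt_irrefl _ this
  have hu : IsUnit B.det := hdet.isUnit
  have hut : IsUnit Bᵀ.det := by rwa [det_transpose]
  refine ⟨(Bᵀ)⁻¹, Matrix.isUnit_nonsing_inv_det _ hut, ?_⟩
  rw [hB', ← Matrix.mul_assoc, nonsing_inv_mul _ hut, Matrix.one_mul, transpose_nonsing_inv,
    transpose_transpose, mul_nonsing_inv _ hu]

lemma hasDerivAt_logdet {d : ℕ} (H : Matrix (Fin d) (Fin d) ℝ) :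
    HasDerivAt (fun r : ℝ => Real.log (1 + r • H).det) H.trace 0 := by
  have h1 : HasDerivAt (fun r : ℝ => (1 + r • H).det) H.trace 0 := by
    rw [funext fun r : ℝ => det_one_add_smul r H]
    set q := (det (1 + (Polynomial.X : Polynomial ℝ) • H.map Polynomial.C)).divX.divX
    have h2 : HasDerivAt (fun r : ℝ => H.trace * r) (H.trace * 1) 0 :=
      (hasDerivAt_id (0 : ℝ)).const_mul _
    have h3 := ((q.hasDerivAt (0 : ℝ)).mul ((hasDerivAt_id (0 : ℝ)).pow 2))
    have h4 := (h2.const_add 1).add h3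
    refine h4.congr_deriv ?_
    simp
  have h5 := h1.log (by simp)
  simpa using h5

lemma critical {d n : ℕ} {m : Fin n → ℕ}
    (F : ∀ i : Fin n, Matrix (Fin d) (Fin (m i)) ℝ)
    (c : Fin n → ℝ) (t : Fin n → ℝ) (ht : ∀ s, obj F c t ≤ obj F c s)
    (A : Matrix (Fin d) (Fin d) ℝ) (hA : IsUnit A.det) (hAM : A * opM F t * Aᵀ = 1) (i : Fin n) :
    Real.exp (t i) * frobSq (A * F i) = c i := by
  classical
  let H : Matrix (Fin d) (Fin d) ℝ := Real.exp (t i) • ((A * F i) * (A * F i)ᵀ)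
  have hop : ∀ s : ℝ, A * opM F (t + Pi.single i s) * Aᵀ = 1 + (Real.exp s - 1) • H := by
    intro s
    have h1 : opM F (t + Pi.single i s) = opM F t
        + ((Real.exp s - 1) * Real.exp (t i)) • (F i * (F i)ᵀ) := by
      unfold opM
      rw [← Finset.add_sum_erase _ _ (Finset.mem_univ i),
        ← Finset.add_sum_erase _ (fun j => Real.exp (t j) • (F j * (F j)ᵀ)) (Finset.mem_univ i)]
      have h2 : ∑ j ∈ Finset.univ.erase i,
          Real.exp ((t + Pi.single i s : Fin n → ℝ) j) • (F j * (F j)ᵀ)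
          = ∑ j ∈ Finset.univ.erase i, Real.exp (t j) • (F j * (F j)ᵀ) := by
        refine Finset.sum_congr rfl fun j hj => ?_
        rw [Pi.add_apply, Pi.single_eq_of_ne (Finset.ne_of_mem_erase hj), add_zero]
      rw [h2, Pi.add_apply, Pi.single_eq_same, Real.exp_add]
      module
    rw [h1, Matrix.mul_add, Matrix.add_mul, hAM]
    simp only [H, Matrix.transpose_mul, Matrix.mul_smul, Matrix.smul_mul, smul_smul,
      Matrix.mul_assoc]
  have hdA : A.det ≠ 0 := hA.ne_zero
  have hdetop : ∀ s : ℝ, (opM F (t + Pi.single i s)).det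
      = (A.det ^ 2)⁻¹ * (1 + (Real.exp s - 1) • H).det := by
    intro s
    rw [← hop s, det_mul, det_mul, det_transpose]
    field_simp
  have hobj : ∀ s : ℝ, obj F c (t + Pi.single i s)
      = Real.log ((A.det ^ 2)⁻¹ * (1 + (Real.exp s - 1) • H).det)
        - (∑ j, t j * c j + s * c i) := by
    intro s
    rw [obj_eq, hdetop]
    simp [add_mul, Finset.sum_add_distrib, Pi.single_apply]
  have hE : HasDerivAt (fun s : ℝ => Real.exp s - 1) 1 0 := by
    simpa using (Real.hasDerivAt_exp 0).sub_const 1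
  have hl : HasDerivAt (fun s : ℝ => Real.log (1 + (Real.exp s - 1) • H).det) H.trace 0 := by
    have h0 : HasDerivAt (fun r : ℝ => Real.log (1 + r • H).det) H.trace (Real.exp 0 - 1) := by
      simpa using hasDerivAt_logdet H
    have h1 := h0.comp (0 : ℝ) hE
    rw [mul_one] at h1
    exact h1
  have hne : ∀ᶠ s in nhds (0 : ℝ), (1 + (Real.exp s - 1) • H).det ≠ 0 := by
    have : Continuous fun s : ℝ => (1 + (Real.exp s - 1) • H).det := by fun_prop
    exact this.continuousAt.eventually_ne (by simp)
  have hD : HasDerivAt (fun s : ℝ => obj F c (t + Pi.single i s)) (H.trace - c i) 0 := by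
    have h6 : HasDerivAt (fun s : ℝ => (Real.log (A.det ^ 2)⁻¹
        + Real.log (1 + (Real.exp s - 1) • H).det) - (∑ j, t j * c j + s * c i))
        (H.trace - c i) 0 := by
      have := (hl.const_add (Real.log (A.det ^ 2)⁻¹)).sub
        (((hasDerivAt_id (0 : ℝ)).mul_const (c i)).const_add (∑ j, t j * c j))
      rw [one_mul] at this
      exact this
    refine h6.congr_of_eventuallyEq ?_
    filter_upwards [hne] with s hs
    rw [hobj, Real.log_mul (by positivity) hs]
  have hmin : IsLocalMin (fun s : ℝ => obj F c (t + Pi.single i s)) 0 := by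
    have h7 : ∀ s : ℝ, obj F c (t + Pi.single i (0 : ℝ)) ≤ obj F c (t + Pi.single i s) := by
      intro s
      rw [Pi.single_zero, add_zero]
      exact ht _
    exact Filter.Eventually.of_forall h7
  have hz := hmin.hasDerivAt_eq_zero hD
  have : H.trace = Real.exp (t i) * frobSq (A * F i) := by
    rw [frobSq_eq_trace, ← smul_eq_mul, ← Matrix.trace_smul]
  linarith

lemma rif_of_min {d n : ℕ} {m : Fin n → ℕ}
    (F : ∀ i : Fin n, Matrix (Fin d) (Fin (m i)) ℝ) (hF : IsMatrixFrame F) (hgen : Generic F)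
    (c : Fin n → ℝ) (hc : ∀ i, 0 < c i) (t : Fin n → ℝ) (ht : ∀ s, obj F c t ≤ obj F c s) :
    ∃ A : Matrix (Fin d) (Fin d) ℝ, IsUnit A.det ∧ TransformsToRIF F c A := by
  obtain ⟨A, hA, hAM⟩ := exists_whiten (opM_posDef F hF hgen t)
  refine ⟨A, hA, ?_⟩
  rw [TransformsToRIF, ← hAM, opM, Matrix.mul_sum, Matrix.sum_mul]
  refine Finset.sum_congr rfl fun i _ => ?_
  have h := critical F c t ht A hA hAM i
  have hne : frobSq (A * F i) ≠ 0 := by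
    intro h0
    rw [h0, mul_zero] at h
    exact (hc i).ne h
  rw [← h, mul_div_cancel_right₀ _ hne]
  simp only [Matrix.transpose_mul, Matrix.mul_smul, Matrix.smul_mul, Matrix.mul_assoc]

lemma frobSq_nonneg {d k : ℕ} (X : Matrix (Fin d) (Fin k) ℝ) : 0 ≤ frobSq X :=
  Finset.sum_nonneg fun _ _ => Finset.sum_nonneg fun _ _ => sq_nonneg _

lemma lt_of_rif {d n : ℕ} {m : Fin n → ℕ}
    (F : ∀ i : Fin n, Matrix (Fin d) (Fin (m i)) ℝ) (hgen : Generic F)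
    (c : Fin n → ℝ) (hc : ∀ i, 0 < c i) (hsum : ∑ i, c i = d)
    (A : Matrix (Fin d) (Fin d) ℝ) (hA : IsUnit A.det) (h : TransformsToRIF F c A) :
    ∀ i, c i < m i := by
  classical
  have hpos : ∀ i, 0 < frobSq (A * F i) := by
    intro i
    refine lt_of_le_of_ne (frobSq_nonneg _) fun h0 => ?_
    have htr := congrArg Matrix.trace h
    rw [Matrix.trace_sum, Matrix.trace_one, Fintype.card_fin, ← hsum] at htr
    simp only [Matrix.trace_smul, ← frobSq_eq_trace, smul_eq_mul] at htr
    refine absurd htr (ne_of_lt ?_)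
    refine Finset.sum_lt_sum (fun j _ => ?_) ⟨i, Finset.mem_univ i, ?_⟩
    · by_cases hj : frobSq (A * F j) = 0
      · rw [hj, mul_zero]; exact (hc j).le
      · rw [div_mul_cancel₀ _ hj]
    · rw [← h0, mul_zero]; exact hc i
  have hm : ∀ i, 0 < m i := by
    intro i
    by_contra h0
    have h0' : m i = 0 := by omega
    have h1 := hpos i
    have : IsEmpty (Fin (m i)) := by rw [h0']; infer_instance
    simp [frobSq] at h1
  let a : Fin n → ℝ := fun i => c i / frobSq (A * F i)
  have ha : ∀ i, 0 < a i := fun i => div_pos (hc i) (hpos i)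
  let y : ((i : Fin n) × Fin (m i)) → Fin d → ℝ := fun p => A *ᵥ col F p
  have hy : ∀ (i : Fin n) (k : Fin (m i)) r, (A * F i) r k = y ⟨i, k⟩ r := by
    intro i k r
    simp [y, Matrix.mul_apply, mulVec, dotProduct, col]
  have hid : ∑ p : (i : Fin n) × Fin (m i), a p.1 • vecMulVec (y p) (y p) = 1 := by
    rw [Fintype.sum_sigma, ← h]
    refine Finset.sum_congr rfl fun i _ => ?_
    rw [mul_transpose_eq_sum, Finset.smul_sum]
    refine Finset.sum_congr rfl fun k _ => ?_
    simp only [hy, a]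
  have hquad : ∀ x : Fin d → ℝ, ∑ p : (i : Fin n) × Fin (m i), a p.1 * (y p ⬝ᵥ x) ^ 2 = x ⬝ᵥ x := by
    intro x
    have h1 : x ⬝ᵥ ((∑ p : (i : Fin n) × Fin (m i), a p.1 • vecMulVec (y p) (y p)) *ᵥ x)
        = x ⬝ᵥ x := by rw [hid, one_mulVec]
    rw [← h1, Matrix.sum_mulVec, dotProduct_sum]
    refine Finset.sum_congr rfl fun p _ => ?_
    rw [smul_mulVec, vecMulVec_mulVec, dotProduct_smul]
    rw [dotProduct_comm x]
    simp [smul_dotProduct, sq]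
  have hcard : d ≤ ((Finset.univ : Finset ((i : Fin n) × Fin (m i)))).card - 1 := by
    have h1 : n ≤ ∑ j, m j := by
      calc n = ∑ j : Fin n, 1 := by simp
        _ ≤ _ := Finset.sum_le_sum fun j _ => hm j
    have h2 := hgen.1
    simp only [Finset.card_univ, Fintype.card_sigma, Fintype.card_fin]
    omega
  have hn : 0 < n := lt_of_le_of_lt (Nat.zero_le d) hgen.1
  have hd : 0 < d := by
    have : Nonempty (Fin n) := ⟨⟨0, hn⟩⟩
    have : (0 : ℝ) < d := by
      rw [← hsum]
      exact Finset.sum_pos (fun i _ => hc i) Finset.univ_nonempty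
    exact_mod_cast this
  -- a vector orthogonal to all columns but one vanishes
  have hkey : ∀ (p : (i : Fin n) × Fin (m i)) (x : Fin d → ℝ),
      (∀ q, q ≠ p → y q ⬝ᵥ x = 0) → x = 0 := by
    intro p x hx
    obtain ⟨S, hSp, hS⟩ := Finset.exists_subset_card_eq (s := Finset.univ.erase p) (n := d)
      (by rw [Finset.card_erase_of_mem (Finset.mem_univ p)]; exact hcard)
    obtain ⟨C, -, hC⟩ := det_sub_ge S hS (col F) (hgen.2 S hS)
    let e : Fin d ≃ S := (Finset.equivFinOfCardEq hS).symm
    let Y : Matrix (Fin d) (Fin d) ℝ := Matrix.of fun j r => col F (e j) r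
    have hY : IsUnit Y := by
      rw [← Matrix.linearIndependent_rows_iff_isUnit]
      exact (hgen.2 S hS).comp e e.injective
    have hz : (Y * Aᵀ) *ᵥ x = 0 := by
      funext j
      have := hx (e j) (Finset.ne_of_mem_erase (hSp (e j).2))
      rw [← Matrix.mulVec_mulVec]
      show (col F (e j)) ⬝ᵥ (Aᵀ *ᵥ x) = 0
      rw [dotProduct_mulVec, vecMul_transpose]
      exact this
    have hU : IsUnit (Y * Aᵀ) :=
      hY.mul ((Matrix.isUnit_iff_isUnit_det _).2 (by rwa [det_transpose]))
    exact Matrix.mulVec_injective_of_isUnit hU (by rw [hz, mulVec_zero])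
  have hyne : ∀ p, 0 < y p ⬝ᵥ y p := by
    intro p
    have h0 : 0 ≤ y p ⬝ᵥ y p := by
      rw [← hquad]
      exact Finset.sum_nonneg fun q _ => mul_nonneg (ha _).le (sq_nonneg _)
    refine lt_of_le_of_ne h0 fun h1 => ?_
    have h2 : y p = 0 := dotProduct_self_eq_zero.1 h1.symm
    obtain ⟨r⟩ : Nonempty (Fin d) := ⟨⟨0, hd⟩⟩
    have h3 : Pi.single r (1 : ℝ) ≠ (0 : Fin d → ℝ) := by simp
    -- choose a set containing p
    obtain ⟨S, hpS, hS⟩ := Finset.exists_superset_card_eq (s := {p}) (n := d)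
      (by rw [Finset.card_singleton]; exact hd) (hcard.trans (Nat.sub_le _ _))
    have h4 := (hgen.2 S hS).ne_zero ⟨p, hpS (Finset.mem_singleton_self p)⟩
    apply h4
    have hU : IsUnit A := (Matrix.isUnit_iff_isUnit_det _).2 hA
    exact Matrix.mulVec_injective_of_isUnit hU (by rw [mulVec_zero]; exact h2)
  have hlt : ∀ p, a p.1 * (y p ⬝ᵥ y p) < 1 := by
    intro p
    by_contra hcon
    rw [not_lt] at hcon
    have h1 := hquad (y p)
    rw [← Finset.add_sum_erase _ _ (Finset.mem_univ p)] at h1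
    have h2 : 0 ≤ ∑ q ∈ Finset.univ.erase p, a q.1 * (y q ⬝ᵥ y p) ^ 2 :=
      Finset.sum_nonneg fun q _ => mul_nonneg (ha _).le (sq_nonneg _)
    have h3 : ∑ q ∈ Finset.univ.erase p, a q.1 * (y q ⬝ᵥ y p) ^ 2 = 0 := by
      have := hyne p
      nlinarith
    rw [Finset.sum_eq_zero_iff_of_nonneg
      (fun q _ => mul_nonneg (ha _).le (sq_nonneg _))] at h3
    have h4 : y p = 0 := hkey p (y p) fun q hq => by
      have := h3 q (Finset.mem_erase.2 ⟨hq, Finset.mem_univ q⟩)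
      rcases mul_eq_zero.1 this with h5 | h5
      · exact absurd h5 (ha _).ne'
      · exact pow_eq_zero_iff (two_ne_zero) |>.1 h5
    have := hyne p
    rw [h4] at this
    simp at this
  intro i
  have hci : c i = ∑ k : Fin (m i), a i * (y ⟨i, k⟩ ⬝ᵥ y ⟨i, k⟩) := by
    rw [← Finset.mul_sum]
    have : ∑ k : Fin (m i), (y ⟨i, k⟩ ⬝ᵥ y ⟨i, k⟩) = frobSq (A * F i) := by
      rw [frobSq, Finset.sum_comm]
      refine Finset.sum_congr rfl fun k _ => ?_
      simp only [dotProduct, hy, sq]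
    rw [this]
    exact (div_mul_cancel₀ _ (hpos i).ne').symm
  rw [hci]
  have : Nonempty (Fin (m i)) := ⟨⟨0, hm i⟩⟩
  calc _ < ∑ k : Fin (m i), (1 : ℝ) :=
        Finset.sum_lt_sum_of_nonempty Finset.univ_nonempty fun k _ => hlt ⟨i, k⟩
    _ = m i := by simp

end MFrames

namespace MFrames

/-- **Matrix Radial Isotropy (Theorem 1(3), generic case).**  For a generic matrix frame `F`
and positive rational weights `c` with `∑ cᵢ = d`, the following are equivalent:
(i) `c` lies in the relative (intrinsic) interior of the orbit polytope `K_F`;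
(ii) `(F, c)` can be transformed into a radial isotropic frame by some `A ∈ GL(d, ℝ)`;
(iii) the infimum defining `f_F(c)` is finite and attained at some `t ∈ ℝⁿ`. -/
theorem matrix_radial_isotropy {d n : ℕ} {m : Fin n → ℕ}
    (F : ∀ i : Fin n, Matrix (Fin d) (Fin (m i)) ℝ)
    (hF : IsMatrixFrame F) (hgen : Generic F)
    (c : Fin n → ℚ) (hc : ∀ i, 0 < c i) (hsum : ∑ i, (c i : ℝ) = d) :
    List.TFAE
      [(fun i => (c i : ℝ)) ∈ intrinsicInterior ℝ (orbitPolytope F),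
       ∃ A : Matrix (Fin d) (Fin d) ℝ, IsUnit A.det ∧
         TransformsToRIF F (fun i => (c i : ℝ)) A,
       ∃ t : Fin n → ℝ, ∀ s : Fin n → ℝ,
         obj F (fun i => (c i : ℝ)) t ≤ obj F (fun i => (c i : ℝ)) s] := by
  have hc' : ∀ i, (0 : ℝ) < (c i : ℝ) := fun i => by exact_mod_cast hc i
  tfae_have 1 → 3 := fun h => exists_min_obj F hF hgen _ hc' hsum
    ((interior_iff F hF hgen _ hc' hsum).1 h)
  tfae_have 3 → 2 := fun ⟨t, ht⟩ => rif_of_min F hF hgen _ hc' t ht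
  tfae_have 2 → 1 := fun ⟨A, hA, h⟩ => (interior_iff F hF hgen _ hc' hsum).2
    (lt_of_rif F hgen _ hc' hsum A hA h)
  tfae_finish

end MFrames
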